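/- Let n be odd, 0 ≤ k ≤ n, let P ∈ ℤ[s,t] be the unique polynomial with P·{k}!_{s,t}·{n−k}!_{s,t} = {n}!_{s,t}, let Q ∈ ℤ[q] be the Gaussian binomial polynomial, i.e. the unique polynomial with Q·[k]!_q·[n−k]!_q = [n]!_q, and let ζ = exp(2πi/n) ∈ ℂ. Then for every integer ℓ, P(ζ^ℓ + ζ^{−ℓ}, −1) = Q(ζ^ℓ). -/

import Mathlib

open MvPolynomial

/-- The generalized Fibonacci polynomials `{m}_{s,t} ∈ ℤ[s,t]`, with `s = X 0`, `t = X 1`. -/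
noncomputable def gfib : ℕ → MvPolynomial (Fin 2) ℤ
  | 0 => 0
  | 1 => 1
  | (m + 2) => X 0 * gfib (m + 1) + X 1 * gfib m

/-- The Fibonacci factorial `{m}!_{s,t}`. -/
noncomputable def gfibFact : ℕ → MvPolynomial (Fin 2) ℤ
  | 0 => 1
  | (m + 1) => gfib (m + 1) * gfibFact m

/-- The q-analogue `[m]_q = 1 + q + ⋯ + q^{m-1} ∈ ℤ[q]`. -/
noncomputable def qInt (m : ℕ) : Polynomial ℤ := ∑ i ∈ Finset.range m, Polynomial.X ^ i

/-- The q-factorial `[m]!_q = [m]_q [m-1]_q ⋯ [1]_q`. -/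
noncomputable def qFact : ℕ → Polynomial ℤ
  | 0 => 1
  | (m + 1) => qInt (m + 1) * qFact m

/-- The primitive `n`-th root of unity `ζ = exp(2πi/n)`. -/
noncomputable def primRoot (n : ℕ) : ℂ := Complex.exp (2 * Real.pi * Complex.I / n)


lemma qInt_succ (m : ℕ) : qInt (m + 1) = qInt m + Polynomial.X ^ m := by
  simp [qInt, Finset.sum_range_succ]

lemma qInt_add (a b : ℕ) : qInt (a + b) = qInt a + Polynomial.X ^ a * qInt b := by
  simp [qInt, Finset.sum_range_add, Finset.mul_sum, pow_add]

lemma qInt_succ_ne (m : ℕ) : qInt (m + 1) ≠ 0 := by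
  intro h
  have := congrArg (Polynomial.eval 1) h
  simp [qInt, Polynomial.eval_finsetSum] at this
  norm_cast at this

lemma qFact_ne (m : ℕ) : qFact m ≠ 0 := by
  induction m with
  | zero => simp [qFact]
  | succ m ih => exact mul_ne_zero (qInt_succ_ne m) ih

noncomputable def EE {R : Type*} [CommRing R] (n : ℕ) (q : R) : Polynomial R :=
  ∏ i ∈ Finset.range n, (1 + Polynomial.C (q ^ i) * Polynomial.X)

lemma EE_succ {R : Type*} [CommRing R] (n : ℕ) (q : R) :
    EE (n + 1) q = EE n q + Polynomial.C (q ^ n) * (EE n q * Polynomial.X) := by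
  simp only [EE, Finset.prod_range_succ]; ring

lemma EE_coeff_succ {R : Type*} [CommRing R] (n k : ℕ) (q : R) :
    (EE (n + 1) q).coeff (k + 1) = (EE n q).coeff (k + 1) + q ^ n * (EE n q).coeff k := by
  rw [EE_succ, Polynomial.coeff_add, Polynomial.coeff_C_mul, Polynomial.coeff_mul_X]

lemma EE_coeff_zero {R : Type*} [CommRing R] (n : ℕ) (q : R) :
    (EE n q).coeff 0 = 1 := by
  induction n with
  | zero => simp [EE]
  | succ n ih => rw [EE_succ]; simp [ih]

lemma EE_coeff_gt {R : Type*} [CommRing R] (n : ℕ) (q : R) :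
    ∀ k, n < k → (EE n q).coeff k = 0 := by
  induction n with
  | zero => intro k hk; simp [EE, Polynomial.coeff_one]; omega
  | succ n ih =>
    intro k hk
    obtain ⟨k, rfl⟩ : ∃ j, k = j + 1 := ⟨k - 1, by omega⟩
    rw [EE_coeff_succ, ih _ (by omega), ih _ (by omega)]; simp

lemma choose_two_succ (m : ℕ) : (m + 1).choose 2 = m + m.choose 2 := by
  rw [Nat.choose_succ_succ' m 1, Nat.choose_one_right]

lemma qbinom (n : ℕ) : ∀ k j, k + j = n →
    (EE n (Polynomial.X : Polynomial ℤ)).coeff k * (qFact k * qFact j)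
      = Polynomial.X ^ (k.choose 2) * qFact n := by
  induction n with
  | zero =>
    intro k j h
    obtain ⟨rfl, rfl⟩ : k = 0 ∧ j = 0 := by omega
    simp [EE, qFact]
  | succ n ih =>
    intro k j h
    rcases k with _ | k
    · obtain rfl : j = n + 1 := by omega
      simp [EE_coeff_zero, qFact]
    · rw [EE_coeff_succ, choose_two_succ]
      have h1 := ih k j (by omega)
      rcases j with _ | j
      · obtain rfl : k = n := by omega
        rw [EE_coeff_gt _ _ _ (Nat.lt_succ_self _)]
        simp only [qFact] at h1 ⊢
        rw [pow_add]
        linear_combination Polynomial.X ^ k * qInt (k + 1) * h1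
      · have h2 := ih (k + 1) j (by omega)
        have h3 : qInt (n + 1) = qInt (j + 1) + Polynomial.X ^ (j + 1) * qInt (k + 1) := by
          rw [← qInt_add]; congr 1; omega
        have h4 : (Polynomial.X : Polynomial ℤ) ^ n
            = Polynomial.X ^ k * Polynomial.X ^ (j + 1) := by
          rw [← pow_add]; congr 1; omega
        rw [choose_two_succ] at h2
        have e1 : qFact (k + 1) = qInt (k + 1) * qFact k := rfl
        have e2 : qFact (j + 1) = qInt (j + 1) * qFact j := rfl
        have e3 : qFact (n + 1) = qInt (n + 1) * qFact n := rfl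
        rw [e1] at h2
        rw [e2] at h1
        rw [e1, e2, e3, h3, h4]
        rw [pow_add] at h2 ⊢
        linear_combination qInt (j + 1) * h2
          + Polynomial.X ^ k * Polynomial.X ^ (j + 1) * qInt (k + 1) * h1

lemma EE_map {R S : Type*} [CommRing R] [CommRing S] (f : R →+* S) (n : ℕ) (q : R) :
    (EE n q).map f = EE n (f q) := by
  simp [EE, Polynomial.map_prod]

lemma Q_eq (n k : ℕ) (hk : k ≤ n) (Q : Polynomial ℤ)
    (hQ : Q * qFact k * qFact (n - k) = qFact n) (w : ℂ) :
    (EE n w).coeff k = w ^ (k.choose 2) * Polynomial.aeval w Q := by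
  have h := qbinom n k (n - k) (by omega)
  have h : (EE n (Polynomial.X : Polynomial ℤ)).coeff k = Polynomial.X ^ (k.choose 2) * Q := by
    have hne : qFact k * qFact (n - k) ≠ 0 := mul_ne_zero (qFact_ne _) (qFact_ne _)
    refine mul_right_cancel₀ hne ?_
    rw [h, ← hQ]; ring
  have h2 := congrArg (Polynomial.aeval w) h
  have h3 := EE_map (Polynomial.aeval w : Polynomial ℤ →ₐ[ℤ] ℂ).toRingHom n Polynomial.X
  have h4 := congrArg (fun p => Polynomial.coeff p k) h3
  simp [Polynomial.coeff_map] at h4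
  rw [← h4, h2]; simp

lemma EE_scale (n k : ℕ) (w : ℂ) (hw : w ^ n = 1) :
    w ^ k * (EE n w).coeff k = (EE n w).coeff k := by
  have h : (EE n w).comp (Polynomial.C w * Polynomial.X) = EE n w := by
    have h1 : (EE n w).comp (Polynomial.C w * Polynomial.X)
        = ∏ i ∈ Finset.range n, (1 + Polynomial.C (w ^ (i + 1)) * Polynomial.X) := by
      simp only [EE, Polynomial.prod_comp]
      refine Finset.prod_congr rfl fun i _ => ?_
      simp [pow_succ]; ring
    rw [h1]
    have h2 := Finset.prod_range_succ (fun i => (1 + Polynomial.C (w ^ i) * Polynomial.X)) n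
    rw [Finset.prod_range_succ'] at h2
    simp only [hw, pow_zero] at h2
    refine mul_right_cancel₀ ?_ h2
    intro h
    simpa using congrArg (Polynomial.eval 0) h
  conv_rhs => rw [← h]
  rw [Polynomial.comp_C_mul_X_coeff, mul_comm]

lemma EE_sq (n : ℕ) (hn : Odd n) (w : ℂ) (hw : w ^ n = 1) : EE n (w ^ 2) = EE n w := by
  obtain ⟨m, rfl⟩ := hn
  have key : ∀ a, w ^ (a % (2 * m + 1)) = w ^ a := fun a => (pow_eq_pow_mod a hw).symm
  have c : ∀ i, i < 2 * m + 1 → (2 * (m + 1) * i) % (2 * m + 1) = i := by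
    intro i hi
    rw [show 2 * (m + 1) * i = i + (2 * m + 1) * i by ring, Nat.add_mul_mod_self_left,
      Nat.mod_eq_of_lt hi]
  unfold EE
  refine Finset.prod_nbij' (fun i => (2 * i) % (2 * m + 1))
    (fun i => ((m + 1) * i) % (2 * m + 1)) ?_ ?_ ?_ ?_ ?_
  · intro i _; exact Finset.mem_range.2 (Nat.mod_lt _ (by omega))
  · intro i _; exact Finset.mem_range.2 (Nat.mod_lt _ (by omega))
  · intro i hi
    simp only [Nat.mul_mod_mod]
    rw [← mul_assoc, mul_comm (m + 1) 2]
    exact c i (by simpa using hi)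
  · intro i hi
    simp only [Nat.mul_mod_mod]
    rw [← mul_assoc]
    exact c i (by simpa using hi)
  · intro i _
    rw [key, pow_mul]

lemma odd_pow_one_aux (n : ℕ) (hn : Odd n) (z : ℂ) (h : z ^ n = 1) (h2 : z ^ 2 = 1) : z = 1 := by
  obtain ⟨m, rfl⟩ := hn
  rwa [pow_succ, pow_mul, h2, one_pow, one_mul] at h

lemma choose_one (n : ℕ) (hn : Odd n) (w : ℂ) (hw : w ^ n = 1) (m : ℕ) (hm : w ^ m = 1) :
    w ^ (m.choose 2) = 1 := by
  refine odd_pow_one_aux n hn _ ?_ ?_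
  · rw [← pow_mul, mul_comm, pow_mul, hw, one_pow]
  · rw [← pow_mul, Nat.choose_two_right, Nat.div_mul_cancel (Nat.even_mul_pred_self m).two_dvd,
      pow_mul, hm, one_pow]

noncomputable def phi : MvPolynomial (Fin 2) ℤ →ₐ[ℤ] Polynomial (Polynomial ℤ) :=
  aeval ![Polynomial.X * Polynomial.C (Polynomial.X + 1),
    - (Polynomial.X ^ 2 * Polynomial.C Polynomial.X)]

lemma phi_gfib (m : ℕ) : phi (gfib m) = 0 ∧ m = 0 ∨
    ∃ j, m = j + 1 ∧ phi (gfib m) = Polynomial.X ^ j * Polynomial.C (qInt m) := by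
  induction m using Nat.strong_induction_on with
  | _ m ih =>
    rcases m with _ | _ | m
    · left; simp [gfib]
    · right; exact ⟨0, rfl, by simp [gfib, qInt]⟩
    · right
      refine ⟨m + 1, rfl, ?_⟩
      have h1 : phi (gfib (m + 1)) = Polynomial.X ^ m * Polynomial.C (qInt (m + 1)) := by
        rcases ih (m + 1) (by omega) with h | ⟨j, hj, h⟩
        · omega
        · obtain rfl : m = j := by omega
          exact h
      have h0 : Polynomial.X * phi (gfib m) = Polynomial.X ^ m * Polynomial.C (qInt m) := by
        rcases ih m (by omega) with ⟨h, rfl⟩ | ⟨j, rfl, h⟩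
        · simp [h, qInt]
        · rw [h]; ring
      have hr : phi (gfib (m + 2)) = Polynomial.X * Polynomial.C (Polynomial.X + 1)
          * phi (gfib (m + 1)) - Polynomial.X ^ 2 * Polynomial.C Polynomial.X * phi (gfib m) := by
        simp [gfib, phi]; ring
      have hq : qInt (m + 1 + 1) = (Polynomial.X + 1) * qInt (m + 1) - Polynomial.X * qInt m := by
        have a := qInt_add 1 m
        have b := qInt_add 1 (m + 1)
        have c : qInt 1 = 1 := by simp [qInt]
        rw [add_comm 1, c] at a b
        rw [b, a]; ring
      rw [hr, h1, hq, Polynomial.C_sub, Polynomial.C_mul, Polynomial.C_mul]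
      linear_combination (- Polynomial.X * Polynomial.C Polynomial.X) * h0

lemma phi_fact (m : ℕ) : phi (gfibFact m)
    = Polynomial.X ^ (m.choose 2) * Polynomial.C (qFact m) := by
  induction m with
  | zero => simp [gfibFact, qFact]
  | succ m ih =>
    rcases phi_gfib (m + 1) with h | ⟨j, hj, h⟩
    · omega
    · obtain rfl : m = j := by omega
      rw [gfibFact, qFact, map_mul, ih, h, choose_two_succ, pow_add, Polynomial.C_mul]; ring

lemma P_eq (n k : ℕ)
    (P : MvPolynomial (Fin 2) ℤ)
    (hP : P * gfibFact k * gfibFact (n - k) = gfibFact n)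
    (Q : Polynomial ℤ)
    (hQ : Q * qFact k * qFact (n - k) = qFact n) (w : ℂ) (hw : w ≠ 0) :
    aeval ![w + w⁻¹, (-1 : ℂ)] P * (w⁻¹ ^ (k.choose 2) * w⁻¹ ^ ((n - k).choose 2))
      = w⁻¹ ^ (n.choose 2) * Polynomial.aeval (w ^ 2) Q := by
  have h := congrArg phi hP
  rw [map_mul, map_mul, phi_fact, phi_fact, phi_fact, ← hQ] at h
  have h1 : phi P * (Polynomial.X ^ (k.choose 2) * Polynomial.X ^ ((n - k).choose 2))
      = Polynomial.X ^ (n.choose 2) * Polynomial.C Q := by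
    have hne : Polynomial.C (qFact k) * Polynomial.C (qFact (n - k)) ≠ 0 := by
      rw [← Polynomial.C_mul]
      exact Polynomial.C_ne_zero.2 (mul_ne_zero (qFact_ne _) (qFact_ne _))
    refine mul_right_cancel₀ hne ?_
    simp only [Polynomial.C_mul] at h
    linear_combination h
  let ψ : Polynomial (Polynomial ℤ) →+* ℂ :=
    Polynomial.eval₂RingHom (Polynomial.aeval (w ^ 2) : Polynomial ℤ →ₐ[ℤ] ℂ).toRingHom w⁻¹
  have h2 : ψ (phi P) = aeval ![w + w⁻¹, (-1 : ℂ)] P := by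
    have : ψ.toIntAlgHom.comp phi = aeval ![w + w⁻¹, (-1 : ℂ)] := by
      apply MvPolynomial.algHom_ext
      intro i
      fin_cases i
      · change ψ (phi (X 0)) = aeval ![w + w⁻¹, (-1 : ℂ)] (X 0)
        simp [phi, ψ]; field_simp
      · change ψ (phi (X 1)) = aeval ![w + w⁻¹, (-1 : ℂ)] (X 1)
        simp [phi, ψ]; field_simp
    exact DFunLike.congr_fun this P
  have h3 := congrArg ψ h1
  rw [map_mul, h2] at h3
  rw [mul_comm (w⁻¹ ^ (n.choose 2))]
  simpa [ψ] using h3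

/-- For `n` odd and `0 ≤ k ≤ n`, the Fibonomial polynomial `P` and the Gaussian binomial
polynomial `Q` satisfy `P(ζ^ℓ + ζ^{-ℓ}, -1) = Q(ζ^ℓ)` for all integers `ℓ`. -/
theorem fibonomial_eval_eq_qbinomial_eval (n k : ℕ) (hn : Odd n) (hk : k ≤ n)
    (P : MvPolynomial (Fin 2) ℤ)
    (hP : P * gfibFact k * gfibFact (n - k) = gfibFact n)
    (Q : Polynomial ℤ)
    (hQ : Q * qFact k * qFact (n - k) = qFact n) :
    ∀ ℓ : ℤ,
      aeval ![primRoot n ^ ℓ + primRoot n ^ (-ℓ), (-1 : ℂ)] P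
        = Polynomial.aeval (primRoot n ^ ℓ) Q := by
  intro ℓ
  have hn0 : n ≠ 0 := by rintro rfl; simp at hn
  have hz : primRoot n ^ n = 1 := (Complex.isPrimitiveRoot_exp n hn0).pow_eq_one
  rw [zpow_neg]
  have hw : (primRoot n ^ ℓ) ^ n = 1 := by
    rw [← zpow_natCast, ← zpow_mul, mul_comm, zpow_mul, zpow_natCast, hz, one_zpow]
  generalize primRoot n ^ ℓ = w at hw
  have hw0 : w ≠ 0 := by rintro rfl; simp [hn0] at hw
  have hp := P_eq n k P hP Q hQ w hw0
  have h1 := Q_eq n k hk Q hQ w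
  have h2 := Q_eq n k hk Q hQ (w ^ 2)
  rw [EE_sq n hn w hw] at h2
  have hs := EE_scale n k w hw
  by_cases hwk : w ^ k = 1
  · have hnk : w ^ (n - k) = 1 := by
      have : w ^ (n - k) * w ^ k = 1 := by rw [← pow_add, Nat.sub_add_cancel hk, hw]
      rwa [hwk, mul_one] at this
    have a := choose_one n hn w hw k hwk
    have b := choose_one n hn w hw _ hnk
    have c := choose_one n hn w hw n hw
    rw [inv_pow, inv_pow, inv_pow, a, b, c] at hp
    rw [← pow_mul, mul_comm 2, pow_mul, a] at h2
    rw [a] at h1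
    simp only [inv_one, one_mul, mul_one, one_pow] at hp h1 h2
    rw [hp, ← h2, h1]
  · have hz : (EE n w).coeff k = 0 := by
      by_contra hne
      exact hwk (mul_right_cancel₀ hne (by rw [hs, one_mul]))
    rw [hz] at h1 h2
    have a : Polynomial.aeval w Q = 0 := by simpa [hw0] using h1.symm
    have b : Polynomial.aeval (w ^ 2) Q = 0 := by simpa [hw0] using h2.symm
    rw [b, mul_zero] at hp
    rw [a]
    simpa [hw0] using hp
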